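/- Let X ⊆ P² be a k-configuration of type (1,2,…,s) with s ≥ 2, and suppose the number r of lines in P² containing exactly s points of X satisfies 1 ≤ r < s. Then there exist subsets X'₁,…,X'_s and lines L'₁,…,L'_s defining X as a k-configuration of type (1,2,…,s) such that none of the r lines containing s points of X passes through the unique point of X'₁. -/

import Mathlib

/-- The projective plane over a field `K`, as the projectivization of `K³`. -/
abbrev P2 (K : Type) [Field K] := Projectivization K (Fin 3 → K)

/-- A line in `P2 K`: a 2-dimensional linear subspace of `K³`. -/
structure ProjLine (K : Type) [Field K] where
  toSubmodule : Submodule K (Fin 3 → K)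
  finrank_eq_two : Module.finrank K toSubmodule = 2

/-- The set of points of `P2 K` lying on a line. -/
def ProjLine.points {K : Type} [Field K] (L : ProjLine K) : Set (P2 K) :=
  {p | p.submodule ≤ L.toSubmodule}

/-- The homogeneous prime ideal of a point of `P2 K`: the ideal generated by
the linear forms vanishing at the point. -/
noncomputable def pointIdeal {K : Type} [Field K] (p : P2 K) :
    Ideal (MvPolynomial (Fin 3) K) :=
  Ideal.span {f | f.IsHomogeneous 1 ∧ MvPolynomial.eval p.rep f = 0}

/-- The defining ideal `I_{mX} = ⋂_{P ∈ X} I_P^m` of the fat point scheme `mX`. -/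
noncomputable def fatIdeal {K : Type} [Field K] (X : Set (P2 K)) (m : ℕ) :
    Ideal (MvPolynomial (Fin 3) K) :=
  ⨅ p ∈ X, (pointIdeal p) ^ m

/-- The Hilbert function of `R/I`: `H(t) = dim_K R_t - dim_K I_t`. -/
noncomputable def hilb {K : Type} [Field K] (I : Ideal (MvPolynomial (Fin 3) K)) (t : ℕ) : ℕ :=
  Module.finrank K ↥(MvPolynomial.homogeneousSubmodule (Fin 3) K t) -
    Module.finrank K ↥(Submodule.restrictScalars K (I : Submodule (MvPolynomial (Fin 3) K) (MvPolynomial (Fin 3) K)) ⊓ MvPolynomial.homogeneousSubmodule (Fin 3) K t)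

/-- The Hilbert function extended to `ℤ`, with `H(t) = 0` for `t < 0`. -/
noncomputable def hilbZ {K : Type} [Field K] (I : Ideal (MvPolynomial (Fin 3) K)) (t : ℤ) : ℤ :=
  if t < 0 then 0 else hilb I t.toNat

/-- The first difference `ΔH(t) = H(t) - H(t-1)` of the Hilbert function. -/
noncomputable def deltaHilb {K : Type} [Field K] (I : Ideal (MvPolynomial (Fin 3) K)) (t : ℤ) : ℤ :=
  hilbZ I t - hilbZ I (t - 1)

/-- `X` is a k-configuration of type `(d 0, …, d (s-1))` defined using the subsets
`Xs 0, …, Xs (s-1)` and the (distinct) lines `Ls 0, …, Ls (s-1)`. -/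
structure IsKConfig {K : Type} [Field K] {s : ℕ} (X : Set (P2 K)) (d : Fin s → ℕ)
    (Xs : Fin s → Set (P2 K)) (Ls : Fin s → ProjLine K) : Prop where
  one_le : ∀ i, 1 ≤ d i
  strictMono : StrictMono d
  lines_distinct : Function.Injective Ls
  union_eq : X = ⋃ i, Xs i
  card_eq : ∀ i, (Xs i).ncard = d i
  subset_line : ∀ i, Xs i ⊆ (Ls i).points
  not_mem : ∀ i j : Fin s, j < i → ∀ p ∈ Xs j, p ∉ (Ls i).points


theorem ProjLine.ext_sub {K : Type} [Field K] {L M : ProjLine K}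
    (h : L.toSubmodule = M.toSubmodule) : L = M := by
  cases L; cases M; simp_all

theorem ProjLine.meet_unique {K : Type} [Field K] {L M : ProjLine K} (h : L ≠ M) {p q : P2 K}
    (hpL : p ∈ L.points) (hpM : p ∈ M.points) (hqL : q ∈ L.points) (hqM : q ∈ M.points) :
    p = q := by
  have hlt : Module.finrank K ↥(L.toSubmodule ⊓ M.toSubmodule) ≤ 1 := by
    by_contra hc
    push Not at hc
    apply h
    apply ProjLine.ext_sub
    have h1 : L.toSubmodule ⊓ M.toSubmodule = L.toSubmodule :=
      Submodule.eq_of_le_of_finrank_le inf_le_left (by rw [L.finrank_eq_two]; omega)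
    have h2 : L.toSubmodule ⊓ M.toSubmodule = M.toSubmodule :=
      Submodule.eq_of_le_of_finrank_le inf_le_right (by rw [M.finrank_eq_two]; omega)
    exact h1.symm.trans h2
  have hp : p.submodule = L.toSubmodule ⊓ M.toSubmodule :=
    Submodule.eq_of_le_of_finrank_le (le_inf hpL hpM) (by rw [p.finrank_submodule]; exact hlt)
  have hq : q.submodule = L.toSubmodule ⊓ M.toSubmodule :=
    Submodule.eq_of_le_of_finrank_le (le_inf hqL hqM) (by rw [q.finrank_submodule]; exact hlt)
  exact Projectivization.submodule_injective (hp.trans hq.symm)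

theorem ProjLine.ncard_inter_le_one {K : Type} [Field K] {L M : ProjLine K} (h : L ≠ M)
    (S : Set (P2 K)) (hS : S ⊆ M.points) : (S ∩ L.points).ncard ≤ 1 := by
  have hsub : (S ∩ L.points).Subsingleton := by
    rintro p ⟨hp, hpL⟩ q ⟨hq, hqL⟩
    exact ProjLine.meet_unique h hpL (hS hp) hqL (hS hq)
  rcases hsub.eq_empty_or_singleton with h0 | ⟨x, h0⟩ <;> simp [h0]

/-- expected number of points of `Xs i` on a line -/
def cnt {s : ℕ} (k i : Fin s) : ℕ := if i < k then 0 else if i = k then k.1 + 1 else 1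

theorem sum_cnt {s : ℕ} (k : Fin s) : ∑ i, cnt k i = s := by
  have h1 : ∑ i : Fin s, (if i < k then 1 else 0) = k.1 := by
    rw [← Finset.card_filter]
    have : Finset.filter (fun i => i < k) Finset.univ = Finset.Iio k := by ext; simp
    rw [this, Fin.card_Iio]
  have h2 : ∑ i : Fin s, (cnt k i + if i < k then 1 else 0)
      = ∑ i : Fin s, (1 + if i = k then k.1 else 0) := by
    apply Finset.sum_congr rfl
    intro i _
    unfold cnt
    by_cases hlt : i < k
    · have : i ≠ k := hlt.ne
      simp [hlt, this]
    · by_cases he : i = k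
      · simp [he]; omega
      · simp [hlt, he]
  rw [Finset.sum_add_distrib, Finset.sum_add_distrib, h1] at h2
  simp at h2
  exact h2

theorem IsKConfig.fin {K : Type} [Field K] {s : ℕ} {X : Set (P2 K)}
    {Xs : Fin s → Set (P2 K)} {Ls : Fin s → ProjLine K}
    (hX : IsKConfig X (fun i : Fin s => i.1 + 1) Xs Ls) (i : Fin s) : (Xs i).Finite := by
  apply Set.finite_of_ncard_pos
  rw [hX.card_eq]; omega

theorem IsKConfig.exists_cnt {K : Type} [Field K] {s : ℕ} {X : Set (P2 K)}
    {Xs : Fin (s + 1) → Set (P2 K)} {Ls : Fin (s + 1) → ProjLine K}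
    (hX : IsKConfig X (fun i : Fin (s + 1) => i.1 + 1) Xs Ls) (L : ProjLine K) :
    ∃ k, ∀ i, (Xs i ∩ L.points).ncard ≤ cnt k i := by
  by_cases h : ∃ k, Ls k = L
  · obtain ⟨k, rfl⟩ := h
    refine ⟨k, fun i => ?_⟩
    unfold cnt
    split_ifs with h1 h2
    · have : Xs i ∩ (Ls k).points = ∅ := by
        ext p
        simp only [Set.mem_inter_iff, Set.mem_empty_iff_false, iff_false, not_and]
        exact hX.not_mem k i h1 p
      simp [this]
    · subst h2
      exact (Set.ncard_le_ncard Set.inter_subset_left (hX.fin i)).trans (hX.card_eq i).le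
    · exact ProjLine.ncard_inter_le_one
        (fun he => h2 (hX.lines_distinct he).symm) _ (hX.subset_line i)
  · push Not at h
    refine ⟨0, fun i => ?_⟩
    have := ProjLine.ncard_inter_le_one (h i).symm _ (hX.subset_line i)
    unfold cnt
    split_ifs with h1 h2
    · simp at h1
    · simpa using this
    · exact this

theorem IsKConfig.ncard_le_sum {K : Type} [Field K] {s : ℕ} {X : Set (P2 K)}
    {Xs : Fin s → Set (P2 K)} {Ls : Fin s → ProjLine K}
    (hX : IsKConfig X (fun i : Fin s => i.1 + 1) Xs Ls) (L : ProjLine K) :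
    (X ∩ L.points).ncard ≤ ∑ i, (Xs i ∩ L.points).ncard := by
  rw [hX.union_eq, Set.iUnion_inter]
  exact Set.ncard_iUnion_le_of_fintype _

theorem IsKConfig.ncard_le {K : Type} [Field K] {s : ℕ} {X : Set (P2 K)}
    {Xs : Fin (s + 1) → Set (P2 K)} {Ls : Fin (s + 1) → ProjLine K}
    (hX : IsKConfig X (fun i : Fin (s + 1) => i.1 + 1) Xs Ls) (L : ProjLine K) :
    (X ∩ L.points).ncard ≤ s + 1 := by
  obtain ⟨k, hk⟩ := hX.exists_cnt L
  exact (hX.ncard_le_sum L).trans ((Finset.sum_le_sum fun i _ => hk i).trans (sum_cnt k).le)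

theorem IsKConfig.remove {K : Type} [Field K] {s : ℕ} {X : Set (P2 K)}
    {Xs : Fin (s + 1) → Set (P2 K)} {Ls : Fin (s + 1) → ProjLine K}
    (hX : IsKConfig X (fun i : Fin (s + 1) => i.1 + 1) Xs Ls) (L : ProjLine K)
    (hL : (X ∩ L.points).ncard = s + 1) :
    ∃ (Ys : Fin s → Set (P2 K)) (Ms : Fin s → ProjLine K),
      IsKConfig (X \ L.points) (fun i : Fin s => i.1 + 1) Ys Ms := by
  obtain ⟨k, hk⟩ := hX.exists_cnt L
  have hsum : ∑ i, (Xs i ∩ L.points).ncard = ∑ i, cnt k i := by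
    apply le_antisymm (Finset.sum_le_sum fun i _ => hk i)
    rw [sum_cnt]
    exact hL.ge.trans (hX.ncard_le_sum L)
  have heq : ∀ i, (Xs i ∩ L.points).ncard = cnt k i := fun i =>
    (Finset.sum_eq_sum_iff_of_le fun i _ => hk i).1 hsum i (Finset.mem_univ i)
  have hdiff : ∀ i, (Xs i \ L.points).ncard + cnt k i = i.1 + 1 := by
    intro i
    rw [← heq i, add_comm, Set.ncard_inter_add_ncard_diff_eq_ncard _ _ (hX.fin i), hX.card_eq i]
  have hkk : Xs k \ L.points = ∅ := by
    rw [← Set.ncard_eq_zero ((hX.fin k).diff)]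
    have := hdiff k
    simp [cnt] at this
    simp [this]
  refine ⟨fun i => Xs (k.succAbove i) \ L.points, fun i => Ls (k.succAbove i),
    fun i => by simp, fun i j h => by simpa using h,
    hX.lines_distinct.comp Fin.succAbove_right_injective, ?_, ?_, ?_, ?_⟩
  · rw [hX.union_eq, Set.iUnion_diff]
    ext p
    simp only [Set.mem_iUnion]
    constructor
    · rintro ⟨i, hi⟩
      by_cases hik : i = k
      · subst hik; rw [hkk] at hi; exact hi.elim
      · obtain ⟨j, rfl⟩ := Fin.exists_succAbove_eq hik
        exact ⟨j, hi⟩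
    · rintro ⟨i, hi⟩
      exact ⟨_, hi⟩
  · intro i
    have h1 := hdiff (k.succAbove i)
    have h2 : k.succAbove i ≠ k := Fin.succAbove_ne k i
    unfold cnt at h1
    by_cases hlt : i.castSucc < k
    · rw [Fin.succAbove_of_castSucc_lt _ _ hlt] at h1 ⊢
      simpa [hlt] using h1
    · rw [Fin.succAbove_of_le_castSucc _ _ (not_lt.1 hlt)] at h1 h2 ⊢
      have h3 : ¬ i.succ < k := fun h => hlt (lt_trans (Fin.castSucc_lt_succ) h)
      simpa [h3, h2] using h1
  · intro i p hp
    exact hX.subset_line _ hp.1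
  · intro i j hij p hp
    exact hX.not_mem _ _ (Fin.succAbove_lt_succAbove_iff.2 hij) p hp.1

theorem IsKConfig.append {K : Type} [Field K] {s : ℕ} {X : Set (P2 K)} (L : ProjLine K)
    (hL : (X ∩ L.points).ncard = s + 1)
    {Xs : Fin s → Set (P2 K)} {Ls : Fin s → ProjLine K}
    (hX : IsKConfig (X \ L.points) (fun i : Fin s => i.1 + 1) Xs Ls) :
    IsKConfig X (fun i : Fin (s + 1) => i.1 + 1)
      (Fin.snoc (α := fun _ => Set (P2 K)) Xs (X ∩ L.points))
      (Fin.snoc (α := fun _ => ProjLine K) Ls L) := by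
  have hsub : ∀ i, Xs i ⊆ X \ L.points := by
    intro i; rw [hX.union_eq]; exact Set.subset_iUnion _ i
  have hne : ∀ i, Ls i ≠ L := by
    rintro i rfl
    have : (Xs i).Nonempty := by
      apply Set.nonempty_of_ncard_ne_zero
      rw [hX.card_eq]; omega
    obtain ⟨p, hp⟩ := this
    exact (hsub i hp).2 (hX.subset_line i hp)
  refine ⟨fun i => by simp, fun i j h => by simpa using h, ?_, ?_, ?_, ?_, ?_⟩
  · intro i j
    induction i using Fin.lastCases with
    | last =>
      induction j using Fin.lastCases with
      | last => simp
      | cast j => simp only [Fin.snoc_last, Fin.snoc_castSucc]; exact fun h => (hne j h.symm).elim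
    | cast i =>
      induction j using Fin.lastCases with
      | last => simp only [Fin.snoc_last, Fin.snoc_castSucc]; exact fun h => (hne i h).elim
      | cast j =>
        simp only [Fin.snoc_castSucc]
        exact fun h => congrArg _ (hX.lines_distinct h)
  · ext p
    simp only [Set.mem_iUnion]
    constructor
    · intro hp
      by_cases hpL : p ∈ L.points
      · exact ⟨Fin.last s, by simpa using ⟨hp, hpL⟩⟩
      · have : p ∈ X \ L.points := ⟨hp, hpL⟩
        rw [hX.union_eq, Set.mem_iUnion] at this
        obtain ⟨i, hi⟩ := this
        exact ⟨i.castSucc, by simpa using hi⟩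
    · rintro ⟨i, hi⟩
      induction i using Fin.lastCases with
      | last => simp only [Fin.snoc_last] at hi; exact hi.1
      | cast i => simp only [Fin.snoc_castSucc] at hi; exact (hsub i hi).1
  · intro i
    induction i using Fin.lastCases with
    | last => simpa using hL
    | cast i => simpa using hX.card_eq i
  · intro i
    induction i using Fin.lastCases with
    | last => simp
    | cast i => simpa using hX.subset_line i
  · intro i j hij p hp
    induction j using Fin.lastCases with
    | last => exact absurd hij (not_lt.2 (Fin.le_last i))
    | cast j =>
      simp only [Fin.snoc_castSucc] at hp
      induction i using Fin.lastCases with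
      | last => simp only [Fin.snoc_last]; exact (hsub j hp).2
      | cast i =>
        simp only [Fin.snoc_castSucc]
        exact hX.not_mem i j (by simpa using hij) p hp

theorem kconfig_aux {K : Type} [Field K] (n : ℕ) : ∀ (X : Set (P2 K))
    (Xs : Fin (n + 1) → Set (P2 K)) (Ls : Fin (n + 1) → ProjLine K)
    (_ : IsKConfig X (fun i : Fin (n + 1) => i.1 + 1) Xs Ls)
    (T : Set (ProjLine K)) (_ : T.Finite) (_ : T.ncard ≤ n)
    (_ : ∀ L ∈ T, (X ∩ L.points).ncard = n + 1),
    ∃ (Xs' : Fin (n + 1) → Set (P2 K)) (Ls' : Fin (n + 1) → ProjLine K) (P : P2 K),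
      IsKConfig X (fun i : Fin (n + 1) => i.1 + 1) Xs' Ls' ∧
      Xs' 0 = {P} ∧ ∀ L ∈ T, P ∉ L.points := by
  induction n with
  | zero =>
    intro X Xs Ls hX T hT hTc hTL
    obtain ⟨P, hP⟩ := Set.ncard_eq_one.1 (hX.card_eq 0)
    have : T = ∅ := (Set.ncard_eq_zero hT).1 (by omega)
    exact ⟨Xs, Ls, P, hX, hP, by simp [this]⟩
  | succ n ih =>
    intro X Xs Ls hX T hT hTc hTL
    rcases T.eq_empty_or_nonempty with h | ⟨M, hM⟩
    · obtain ⟨P, hP⟩ := Set.ncard_eq_one.1 (hX.card_eq 0)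
      exact ⟨Xs, Ls, P, hX, hP, by simp [h]⟩
    · obtain ⟨Ys, Ms, hY⟩ := hX.remove M (hTL M hM)
      have hXfin : X.Finite := by
        rw [hX.union_eq]; exact Set.finite_iUnion hX.fin
      obtain ⟨Xs', Ls', P, hC, h0, hP⟩ := ih _ Ys Ms hY (T \ {M}) hT.diff
        (by rw [Set.ncard_diff_singleton_of_mem hM]; omega) (by
          rintro L ⟨hL, hLM⟩
          apply le_antisymm (hY.ncard_le L)
          have h1 := Set.ncard_inter_add_ncard_diff_eq_ncard (X ∩ L.points) M.points
            (hXfin.subset Set.inter_subset_left)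
          have h2 := ProjLine.ncard_inter_le_one (L := M) (M := L) (fun h => hLM h.symm)
            (X ∩ L.points) Set.inter_subset_right
          have h3 : (X \ M.points) ∩ L.points = (X ∩ L.points) \ M.points := by
            ext; simp; tauto
          rw [hTL L hL] at h1
          rw [h3]; omega)
      have hPX : P ∈ X \ M.points := by
        rw [hC.union_eq]
        exact Set.mem_iUnion.2 ⟨0, by rw [h0]; rfl⟩
      refine ⟨_, _, P, IsKConfig.append M (hTL M hM) hC, ?_, ?_⟩
      · rw [← h0, ← Fin.castSucc_zero, Fin.snoc_castSucc]
      · intro L hL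
        by_cases hLM : L = M
        · rw [hLM]; exact hPX.2
        · exact hP L ⟨hL, hLM⟩

/-- **Lemma (case of `1 ≤ r < s` lines).** Let `X` be a k-configuration of type
`(1,2,…,s)`, `s ≥ 2`, such that the number `r` of lines containing exactly `s`
points of `X` satisfies `1 ≤ r < s`. Then, after relabelling, `X` can be
defined by data `X'₁,…,X'_s`, `L'₁,…,L'_s` so that none of the `r` lines
containing `s` points of `X` passes through the unique point of `X'₁`. -/
theorem kconfig_few_lines_relabel {K : Type} [Field K] [IsAlgClosed K] {s : ℕ} (hs : 2 ≤ s)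
    (X : Set (P2 K)) (Xs : Fin s → Set (P2 K)) (Ls : Fin s → ProjLine K)
    (hX : IsKConfig X (fun i : Fin s => i.1 + 1) Xs Ls)
    (r : ℕ) (hr1 : 1 ≤ r) (hrs : r < s)
    (hfin : {L : ProjLine K | (X ∩ L.points).ncard = s}.Finite)
    (hcard : {L : ProjLine K | (X ∩ L.points).ncard = s}.ncard = r) :
    ∃ (Xs' : Fin s → Set (P2 K)) (Ls' : Fin s → ProjLine K) (P : P2 K),
      IsKConfig X (fun i : Fin s => i.1 + 1) Xs' Ls' ∧
      Xs' ⟨0, by omega⟩ = {P} ∧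
      ∀ L : ProjLine K, (X ∩ L.points).ncard = s → P ∉ L.points := by
  obtain ⟨n, rfl⟩ : ∃ n, s = n + 1 := ⟨s - 1, by omega⟩
  obtain ⟨Xs', Ls', P, h1, h2, h3⟩ := kconfig_aux n X Xs Ls hX _ hfin (by omega) (fun L hL => hL)
  exact ⟨Xs', Ls', P, h1, h2, h3⟩
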